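/- Let φ : ℝⁿ × I → ℝ be a smooth convex function on ℝⁿ times an open interval I ⊆ ℝ, such that for each t the function x ↦ φ(x,t) grows sufficiently fast (e.g. φ(x,t) ≥ c|x|² − C uniformly on compacts in t). Then the function F(t) = −log ∫_{ℝⁿ} e^{−φ(x,t)} dx is convex on I. -/

import Mathlib

open MeasureTheory

/-!
A function `φ` that is convex in `(x, t)` makes `e^{-φ}` log-concave, so the theorem is the
Prékopa–Leindler inequality applied to `f = e^{-φ(·, s)}`, `g = e^{-φ(·, t)}` and
`h = e^{-φ(·, as + bt)}`, followed by `-log`.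

Prékopa–Leindler tensorizes by Fubini and passes to linear images and multiples of a measure, which
reduces every Haar measure to Lebesgue measure on the line. There, after rescaling `f` so that `f`
and `g` have the same supremum, the superlevel sets satisfy
`a • {l < f} + b • {l < g} ⊆ {l < h}` and are nonempty for the same `l`. The one-dimensional
Brunn–Minkowski inequality, integrated over `l`, gives `a ∫ f + b ∫ g ≤ ∫ h`, which is stronger than
the geometric mean bound by AM-GM.
-/

open Set Real
open scoped ENNReal Pointwise

theorem volume_add_volume_le_volume_add_of_isCompact {K L : Set ℝ} (hK : IsCompact K)
    (hL : IsCompact L) (hK₀ : K.Nonempty) (hL₀ : L.Nonempty) :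
    volume K + volume L ≤ volume (K + L) := by
  obtain ⟨M, hM, hKM⟩ := hK.exists_isGreatest hK₀
  obtain ⟨m, hm, hmL⟩ := hL.exists_isLeast hL₀
  -- `K + m` and `M + L` lie in `K + L`, to the left and to the right of `M + m`.
  have hinter : (K + {m}) ∩ ({M} + L) ⊆ {M + m} := by
    simp only [add_singleton, singleton_add]
    rintro z ⟨⟨x, hx, rfl⟩, y, hy, hxy⟩
    have hxM := hKM hx
    have hmy := hmL hy
    simp only [mem_singleton_iff] at hxy ⊢
    linarith
  have hdisj : AEDisjoint volume (K + {m}) ({M} + L) :=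
    measure_mono_null hinter (measure_singleton _)
  calc volume K + volume L = volume (K + {m}) + volume ({M} + L) := by simp
    _ = volume ((K + {m}) ∪ ({M} + L)) :=
        (measure_union₀ (isCompact_singleton.add hL).measurableSet.nullMeasurableSet hdisj).symm
    _ ≤ volume (K + L) := measure_mono <| union_subset
        (add_subset_add_left (singleton_subset_iff.2 hm))
        (add_subset_add_right (singleton_subset_iff.2 hM))

theorem volume_add_volume_le_volume_add {A B : Set ℝ} (hA : MeasurableSet A)
    (hB : MeasurableSet B) (hA₀ : A.Nonempty) (hB₀ : B.Nonempty) :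
    volume A + volume B ≤ volume (A + B) := by
  obtain ⟨x, hx⟩ := hA₀
  obtain ⟨y, hy⟩ := hB₀
  have hcompact : ∀ K, K ⊆ A ∧ IsCompact K → ∀ L, L ⊆ B ∧ IsCompact L →
      volume K + volume L ≤ volume (A + B) := fun K ⟨hKA, hK⟩ L ⟨hLB, hL⟩ =>
    calc volume K + volume L ≤ volume (insert x K) + volume (insert y L) := by
          gcongr <;> exact subset_insert _ _
      _ ≤ volume (insert x K + insert y L) :=
          volume_add_volume_le_volume_add_of_isCompact (hK.insert x) (hL.insert y)
            (insert_nonempty _ _) (insert_nonempty _ _)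
      _ ≤ volume (A + B) := measure_mono <|
          add_subset_add (insert_subset hx hKA) (insert_subset hy hLB)
  rw [hA.measure_eq_iSup_isCompact, hB.measure_eq_iSup_isCompact]
  simp only [iSup_and']
  exact ENNReal.biSup_add_biSup_le' ⟨∅, empty_subset _, isCompact_empty⟩
    ⟨∅, empty_subset _, isCompact_empty⟩ hcompact

theorem ofReal_mul_volume_add_ofReal_mul_volume_le {a b : ℝ} (ha : 0 < a) (hb : 0 < b)
    {A B : Set ℝ} (hA : MeasurableSet A) (hB : MeasurableSet B) (hA₀ : A.Nonempty)
    (hB₀ : B.Nonempty) :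
    ENNReal.ofReal a * volume A + ENNReal.ofReal b * volume B ≤ volume (a • A + b • B) := by
  simpa [Measure.addHaar_smul, abs_of_pos ha, abs_of_pos hb] using
    volume_add_volume_le_volume_add (hA.const_smul_of_ne_zero ha.ne')
      (hB.const_smul_of_ne_zero hb.ne') hA₀.smul_set hB₀.smul_set

section LayerCake

variable {α : Type*} [MeasurableSpace α] {μ : Measure α} {f : α → ℝ≥0∞}

theorem volume_restrict_Ioi_setOf_ofReal_lt (y : ℝ≥0∞) :
    volume.restrict (Ioi 0) {l : ℝ | ENNReal.ofReal l < y} = y := by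
  rw [Measure.restrict_apply (measurableSet_lt ENNReal.measurable_ofReal measurable_const)]
  by_cases hy : y = ∞
  · simp [hy]
  · have hIoo : {l : ℝ | ENNReal.ofReal l < y} ∩ Ioi 0 = Ioo 0 y.toReal := by
      ext l
      simp only [mem_inter_iff, mem_ofPred_eq, mem_Ioi, mem_Ioo, and_comm (a := 0 < l)]
      exact and_congr_left fun hl => ENNReal.ofReal_lt_iff_lt_toReal hl.le hy
    simp [hIoo, hy]

-- Unlike `lintegral_eq_lintegral_meas_lt`, this allows `f` to take the value `∞`.
theorem lintegral_eq_lintegral_Ioi_measure_ofReal_lt [SFinite μ] (hf : Measurable f) :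
    ∫⁻ x, f x ∂μ = ∫⁻ l in Ioi (0 : ℝ), μ {x | ENNReal.ofReal l < f x} := by
  have hsubgraph : MeasurableSet {p : α × ℝ | ENNReal.ofReal p.2 < f p.1} :=
    measurableSet_lt (ENNReal.measurable_ofReal.comp measurable_snd) (hf.comp measurable_fst)
  calc ∫⁻ x, f x ∂μ = ∫⁻ x, volume.restrict (Ioi 0) {l : ℝ | ENNReal.ofReal l < f x} ∂μ := by
        simp only [volume_restrict_Ioi_setOf_ofReal_lt]
    _ = μ.prod (volume.restrict (Ioi 0)) {p : α × ℝ | ENNReal.ofReal p.2 < f p.1} :=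
        (Measure.prod_apply hsubgraph).symm
    _ = ∫⁻ l in Ioi (0 : ℝ), μ {x | ENNReal.ofReal l < f x} := Measure.prod_apply_symm hsubgraph

theorem lintegral_eq_iSup_lintegral_min_natCast (hf : Measurable f) :
    ∫⁻ x, f x ∂μ = ⨆ n : ℕ, ∫⁻ x, min (f x) n ∂μ := by
  rw [← lintegral_iSup (fun n => hf.min measurable_const)
    fun m n hmn x => min_le_min_left (f x) (Nat.cast_le.2 hmn)]
  simp only [← inf_iSup_eq, ENNReal.iSup_natCast, inf_top_eq]

end LayerCake

section WeightedMeans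

variable {a b : ℝ}

theorem ennreal_rpow_mul_rpow_le_ofReal_mul_add (ha : 0 < a) (hb : 0 < b) (hab : a + b = 1)
    (x y : ℝ≥0∞) : x ^ a * y ^ b ≤ ENNReal.ofReal a * x + ENNReal.ofReal b * y := by
  by_cases hx : x = ∞
  · simp [hx, ENNReal.mul_top, ha]
  by_cases hy : y = ∞
  · simp [hy, ENNReal.mul_top, hb]
  lift x to NNReal using hx
  lift y to NNReal using hy
  lift a to NNReal using ha.le
  lift b to NNReal using hb.le
  rw [ENNReal.ofReal_coe_nnreal, ENNReal.ofReal_coe_nnreal,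
    ← ENNReal.coe_rpow_of_nonneg _ ha.le, ← ENNReal.coe_rpow_of_nonneg _ hb.le]
  exact_mod_cast NNReal.geom_mean_le_arith_mean2_weighted a b x y (by exact_mod_cast hab)

theorem ennreal_min_le_rpow_mul_rpow (ha : 0 ≤ a) (hb : 0 ≤ b) (hab : a + b = 1) (x y : ℝ≥0∞) :
    min x y ≤ x ^ a * y ^ b :=
  calc min x y = min x y ^ a * min x y ^ b := by
        rw [← ENNReal.rpow_add_of_nonneg _ _ ha hb, hab, ENNReal.rpow_one]
    _ ≤ x ^ a * y ^ b := by
        gcongr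
        exacts [min_le_left x y, min_le_right x y]

theorem ennreal_iSup_rpow {ι : Sort*} (ha : 0 < a) (u : ι → ℝ≥0∞) :
    (⨆ i, u i) ^ a = ⨆ i, u i ^ a :=
  (ENNReal.orderIsoRpow a ha).map_iSup u

end WeightedMeans

section RealLine

variable {a b : ℝ} {f g h : ℝ → ℝ≥0∞}

theorem ofReal_mul_lintegral_add_le_of_min_le (ha : 0 < a) (hb : 0 < b) (hf : Measurable f)
    (hg : Measurable g) (hh : Measurable h) (hsup : ⨆ x, f x = ⨆ x, g x)
    (hmin : ∀ x y, min (f x) (g y) ≤ h (a • x + b • y)) :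
    ENNReal.ofReal a * (∫⁻ x, f x) + ENNReal.ofReal b * (∫⁻ x, g x) ≤ ∫⁻ x, h x := by
  have hlevel (l : ℝ≥0∞) : ENNReal.ofReal a * volume {x | l < f x} +
      ENNReal.ofReal b * volume {x | l < g x} ≤ volume {x | l < h x} := by
    by_cases hl : l < ⨆ x, f x
    · have hf_level : {x | l < f x}.Nonempty := lt_iSup_iff.1 hl
      have hg_level : {x | l < g x}.Nonempty := lt_iSup_iff.1 (hl.trans_eq hsup)
      refine (ofReal_mul_volume_add_ofReal_mul_volume_le ha hb
        (measurableSet_lt measurable_const hf) (measurableSet_lt measurable_const hg)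
        hf_level hg_level).trans (measure_mono ?_)
      rintro _ ⟨_, ⟨x, hx, rfl⟩, _, ⟨y, hy, rfl⟩, rfl⟩
      exact (lt_min hx hy).trans_le (hmin x y)
    · have hf_empty : {x | l < f x} = ∅ :=
        eq_empty_of_forall_notMem fun x hx => hl (hx.trans_le (le_iSup f x))
      have hg_empty : {x | l < g x} = ∅ :=
        eq_empty_of_forall_notMem fun x hx => hl (hsup ▸ hx.trans_le (le_iSup g x))
      simp [hf_empty, hg_empty]
  rw [lintegral_eq_lintegral_Ioi_measure_ofReal_lt hf,
    lintegral_eq_lintegral_Ioi_measure_ofReal_lt hg,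
    lintegral_eq_lintegral_Ioi_measure_ofReal_lt hh,
    ← lintegral_const_mul' _ _ ENNReal.ofReal_ne_top,
    ← lintegral_const_mul' _ _ ENNReal.ofReal_ne_top]
  exact (le_lintegral_add _ _).trans (lintegral_mono fun l => hlevel (ENNReal.ofReal l))

theorem rpow_lintegral_mul_rpow_lintegral_le_of_iSup_ne_top (ha : 0 < a) (hb : 0 < b)
    (hab : a + b = 1) (hf : Measurable f) (hg : Measurable g) (hh : Measurable h)
    (hf_top : ⨆ x, f x ≠ ∞) (hg_top : ⨆ x, g x ≠ ∞)
    (hfgh : ∀ x y, f x ^ a * g y ^ b ≤ h (a • x + b • y)) :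
    (∫⁻ x, f x) ^ a * (∫⁻ x, g x) ^ b ≤ ∫⁻ x, h x := by
  by_cases hf_zero : ⨆ x, f x = 0
  · simp [ENNReal.iSup_eq_zero.1 hf_zero, ha]
  by_cases hg_zero : ⨆ x, g x = 0
  · simp [ENNReal.iSup_eq_zero.1 hg_zero, hb]
  set d := (⨆ x, g x) / ⨆ x, f x with hd
  have hd_zero : d ^ a ≠ 0 := by simp [hd, ENNReal.rpow_eq_zero_iff, hg_zero, hf_top, ha.not_gt]
  have hd_top : d ^ a ≠ ∞ :=
    ENNReal.rpow_ne_top_of_nonneg ha.le (ENNReal.div_ne_top hg_top hf_zero)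
  have hsup : ⨆ x, d * f x = ⨆ x, g x := by
    rw [← ENNReal.mul_iSup, hd, ENNReal.div_mul_cancel hf_zero hf_top]
  have hmin (x y : ℝ) : min (d * f x) (g y) ≤ d ^ a * h (a • x + b • y) :=
    calc min (d * f x) (g y) ≤ (d * f x) ^ a * g y ^ b :=
          ennreal_min_le_rpow_mul_rpow ha.le hb.le hab _ _
      _ = d ^ a * (f x ^ a * g y ^ b) := by rw [ENNReal.mul_rpow_of_nonneg _ _ ha.le, mul_assoc]
      _ ≤ d ^ a * h (a • x + b • y) := by gcongr; exact hfgh x y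
  rw [← ENNReal.mul_le_mul_iff_right hd_zero hd_top]
  calc d ^ a * ((∫⁻ x, f x) ^ a * (∫⁻ x, g x) ^ b)
      = (∫⁻ x, d * f x) ^ a * (∫⁻ x, g x) ^ b := by
        rw [lintegral_const_mul _ hf, ENNReal.mul_rpow_of_nonneg _ _ ha.le, mul_assoc]
    _ ≤ ENNReal.ofReal a * (∫⁻ x, d * f x) + ENNReal.ofReal b * (∫⁻ x, g x) :=
        ennreal_rpow_mul_rpow_le_ofReal_mul_add ha hb hab _ _
    _ ≤ ∫⁻ x, d ^ a * h x :=
        ofReal_mul_lintegral_add_le_of_min_le ha hb (hf.const_mul d) hg (hh.const_mul _) hsup hmin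
    _ = d ^ a * ∫⁻ x, h x := lintegral_const_mul _ hh

end RealLine

/-- The measure `μ` satisfies the Prékopa–Leindler inequality: `(∫ f) ^ a * (∫ g) ^ b ≤ ∫ h` for
all weights `a + b = 1` and all measurable `f`, `g`, `h` with
`f x ^ a * g y ^ b ≤ h (a • x + b • y)`. The functions take values in `[0, ∞]`, so that the property
needs no integrability and can be iterated over the factors of a product. -/
def PrekopaLeindler {E : Type*} [AddCommGroup E] [Module ℝ E] [MeasurableSpace E]
    (μ : Measure E) : Prop :=
  ∀ ⦃a b : ℝ⦄, 0 < a → 0 < b → a + b = 1 → ∀ ⦃f g h : E → ℝ≥0∞⦄, Measurable f → Measurable g →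
    Measurable h → (∀ x y, f x ^ a * g y ^ b ≤ h (a • x + b • y)) →
    (∫⁻ x, f x ∂μ) ^ a * (∫⁻ x, g x ∂μ) ^ b ≤ ∫⁻ x, h x ∂μ

theorem prekopaLeindler_volume_real : PrekopaLeindler (volume : Measure ℝ) := by
  intro a b ha hb hab f g h hf hg hh hfgh
  rw [lintegral_eq_iSup_lintegral_min_natCast hf, lintegral_eq_iSup_lintegral_min_natCast hg,
    ennreal_iSup_rpow ha, ennreal_iSup_rpow hb]
  simp only [ENNReal.iSup_mul, ENNReal.mul_iSup, iSup_le_iff]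
  intro n m
  have iSup_min_ne_top (u : ℝ → ℝ≥0∞) (k : ℕ) : ⨆ x, min (u x) k ≠ ∞ :=
    ne_top_of_le_ne_top (ENNReal.natCast_ne_top k) (iSup_le fun x => min_le_right _ _)
  refine rpow_lintegral_mul_rpow_lintegral_le_of_iSup_ne_top ha hb hab (hf.min measurable_const)
    (hg.min measurable_const) hh (iSup_min_ne_top f m) (iSup_min_ne_top g n) fun x y => ?_
  calc min (f x) m ^ a * min (g y) n ^ b ≤ f x ^ a * g y ^ b := by
        gcongr <;> exact min_le_left _ _
    _ ≤ h (a • x + b • y) := hfgh x y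

section Permanence

variable {E F : Type*} [AddCommGroup E] [Module ℝ E] [MeasurableSpace E]
  [AddCommGroup F] [Module ℝ F] [MeasurableSpace F] {μ : Measure E} {ν : Measure F}

theorem prekopaLeindler_dirac (p : E) : PrekopaLeindler (Measure.dirac p) := by
  intro a b _ _ hab f g h hf hg hh hfgh
  rw [lintegral_dirac' _ hf, lintegral_dirac' _ hg, lintegral_dirac' _ hh]
  simpa only [Convex.combo_self hab] using hfgh p p

theorem PrekopaLeindler.smul (hμ : PrekopaLeindler μ) (c : ℝ≥0∞) : PrekopaLeindler (c • μ) := by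
  intro a b ha hb hab f g h hf hg hh hfgh
  simp only [lintegral_smul_measure, smul_eq_mul]
  calc (c * ∫⁻ x, f x ∂μ) ^ a * (c * ∫⁻ x, g x ∂μ) ^ b
      = c ^ a * c ^ b * ((∫⁻ x, f x ∂μ) ^ a * (∫⁻ x, g x ∂μ) ^ b) := by
        rw [ENNReal.mul_rpow_of_nonneg _ _ ha.le, ENNReal.mul_rpow_of_nonneg _ _ hb.le,
          mul_mul_mul_comm]
    _ = c * ((∫⁻ x, f x ∂μ) ^ a * (∫⁻ x, g x ∂μ) ^ b) := by
        rw [← ENNReal.rpow_add_of_nonneg _ _ ha.le hb.le, hab, ENNReal.rpow_one]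
    _ ≤ c * ∫⁻ x, h x ∂μ := by gcongr; exact hμ ha hb hab hf hg hh hfgh

theorem PrekopaLeindler.map (hμ : PrekopaLeindler μ) (e : E →ₗ[ℝ] F) (he : Measurable e) :
    PrekopaLeindler (μ.map e) := by
  intro a b ha hb hab f g h hf hg hh hfgh
  rw [lintegral_map hf he, lintegral_map hg he, lintegral_map hh he]
  refine hμ ha hb hab (hf.comp he) (hg.comp he) (hh.comp he) fun x y => ?_
  simpa only [map_add, map_smul] using hfgh (e x) (e y)

theorem PrekopaLeindler.prod [SFinite ν] (hμ : PrekopaLeindler μ)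
    (hν : PrekopaLeindler ν) : PrekopaLeindler (μ.prod ν) := by
  intro a b ha hb hab f g h hf hg hh hfgh
  rw [lintegral_prod _ hf.aemeasurable, lintegral_prod _ hg.aemeasurable,
    lintegral_prod _ hh.aemeasurable]
  exact hμ ha hb hab hf.lintegral_prod_right' hg.lintegral_prod_right' hh.lintegral_prod_right'
    fun x y => hν ha hb hab (hf.comp measurable_prodMk_left) (hg.comp measurable_prodMk_left)
      (hh.comp measurable_prodMk_left) fun u v => hfgh (x, u) (y, v)

theorem PrekopaLeindler.pi {n : ℕ} {E : Fin n → Type*} [∀ i, AddCommGroup (E i)]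
    [∀ i, Module ℝ (E i)] [∀ i, MeasurableSpace (E i)] {μ : ∀ i, Measure (E i)}
    [∀ i, SigmaFinite (μ i)] (hμ : ∀ i, PrekopaLeindler (μ i)) :
    PrekopaLeindler (Measure.pi μ) := by
  induction n with
  | zero => exact Measure.pi_of_empty μ 0 ▸ prekopaLeindler_dirac 0
  | succ n ih =>
    let e := Fin.consLinearEquiv ℝ E
    have he : ⇑e = (MeasurableEquiv.piFinSuccAbove E 0).symm := by
      ext _ i
      exact Fin.cases rfl (fun _ => rfl) i
    have hmap := (measurePreserving_piFinSuccAbove μ 0).symm.map_eq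
    rw [← hmap, ← he]
    exact ((hμ 0).prod (ih fun i => hμ i.succ)).map e.toLinearMap
      (he ▸ MeasurableEquiv.measurable _)

end Permanence

theorem prekopaLeindler_of_isAddHaarMeasure {E : Type*} [NormedAddCommGroup E] [NormedSpace ℝ E]
    [FiniteDimensional ℝ E] [MeasurableSpace E] [BorelSpace E] (μ : Measure E)
    [μ.IsAddHaarMeasure] : PrekopaLeindler μ := by
  let e : (Fin (Module.finrank ℝ E) → ℝ) ≃L[ℝ] E :=
    ContinuousLinearEquiv.ofFinrankEq (Module.finrank_fin_fun ℝ)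
  have hpi : PrekopaLeindler (volume : Measure (Fin (Module.finrank ℝ E) → ℝ)) :=
    .pi fun _ => prekopaLeindler_volume_real
  rw [Measure.isAddLeftInvariant_eq_smul μ (volume.map e)]
  exact (hpi.map e.toLinearMap e.continuous.measurable).smul _

theorem PrekopaLeindler.rpow_integral_mul_rpow_integral_le {E : Type*} [AddCommGroup E]
    [Module ℝ E] [MeasurableSpace E] {μ : Measure E} (hμ : PrekopaLeindler μ) {a b : ℝ}
    (ha : 0 < a) (hb : 0 < b) (hab : a + b = 1) {f g h : E → ℝ} (hf : Measurable f)
    (hg : Measurable g) (hh : Measurable h) (hf₀ : 0 ≤ f) (hg₀ : 0 ≤ g) (hh₀ : 0 ≤ h)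
    (hf_int : Integrable f μ) (hg_int : Integrable g μ) (hh_int : Integrable h μ)
    (hfgh : ∀ x y, f x ^ a * g y ^ b ≤ h (a • x + b • y)) :
    (∫ x, f x ∂μ) ^ a * (∫ x, g x ∂μ) ^ b ≤ ∫ x, h x ∂μ := by
  have hofReal (u v : ℝ) (hu : 0 ≤ u) (hv : 0 ≤ v) : ENNReal.ofReal (u ^ a * v ^ b) =
      ENNReal.ofReal u ^ a * ENNReal.ofReal v ^ b := by
    rw [ENNReal.ofReal_mul (rpow_nonneg hu a), ENNReal.ofReal_rpow_of_nonneg hu ha.le,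
      ENNReal.ofReal_rpow_of_nonneg hv hb.le]
  rw [← ENNReal.ofReal_le_ofReal_iff (integral_nonneg hh₀),
    hofReal _ _ (integral_nonneg hf₀) (integral_nonneg hg₀),
    ofReal_integral_eq_lintegral_ofReal hf_int (.of_forall hf₀),
    ofReal_integral_eq_lintegral_ofReal hg_int (.of_forall hg₀),
    ofReal_integral_eq_lintegral_ofReal hh_int (.of_forall hh₀)]
  refine hμ ha hb hab hf.ennreal_ofReal hg.ennreal_ofReal hh.ennreal_ofReal fun x y => ?_
  rw [← hofReal _ _ (hf₀ x) (hg₀ y)]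
  exact ENNReal.ofReal_le_ofReal (hfgh x y)

theorem PrekopaLeindler.neg_log_integral_exp_neg_le {E : Type*} [AddCommGroup E] [Module ℝ E]
    [MeasurableSpace E] {μ : Measure E} [NeZero μ] (hμ : PrekopaLeindler μ) {a b : ℝ}
    (ha : 0 < a) (hb : 0 < b) (hab : a + b = 1) {u v w : E → ℝ} (hu : Measurable u)
    (hv : Measurable v) (hw : Measurable w) (hu_int : Integrable (fun x => exp (-u x)) μ)
    (hv_int : Integrable (fun x => exp (-v x)) μ) (hw_int : Integrable (fun x => exp (-w x)) μ)
    (huvw : ∀ x y, w (a • x + b • y) ≤ a * u x + b * v y) :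
    -log (∫ x, exp (-w x) ∂μ) ≤
      a * -log (∫ x, exp (-u x) ∂μ) + b * -log (∫ x, exp (-v x) ∂μ) := by
  have hprod : (∫ x, exp (-u x) ∂μ) ^ a * (∫ x, exp (-v x) ∂μ) ^ b ≤ ∫ x, exp (-w x) ∂μ := by
    refine hμ.rpow_integral_mul_rpow_integral_le ha hb hab (measurable_exp.comp hu.neg)
      (measurable_exp.comp hv.neg) (measurable_exp.comp hw.neg) (fun _ => (exp_pos _).le)
      (fun _ => (exp_pos _).le) (fun _ => (exp_pos _).le) hu_int hv_int hw_int fun x y => ?_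
    rw [← exp_mul, ← exp_mul, ← exp_add, exp_le_exp]
    linarith [huvw x y]
  have hu_pos := integral_exp_pos hu_int
  have hv_pos := integral_exp_pos hv_int
  have hlog := log_le_log (by positivity) hprod
  rw [log_mul (by positivity) (by positivity), log_rpow hu_pos, log_rpow hv_pos] at hlog
  linarith

theorem integrable_exp_neg_of_quadratic_le {V : Type*} [NormedAddCommGroup V]
    [InnerProductSpace ℝ V] [FiniteDimensional ℝ V] [MeasurableSpace V] [BorelSpace V] {ψ : V → ℝ}
    (hψ : AEStronglyMeasurable ψ) {c C : ℝ} (hc : 0 < c) (hle : ∀ x, c * ‖x‖ ^ 2 - C ≤ ψ x) :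
    Integrable fun x => exp (-ψ x) := by
  have hgauss : Integrable fun x : V => exp C * exp (-c * ‖x‖ ^ 2) := by
    have := (GaussianFourier.integrable_cexp_neg_mul_sq_norm_add (V := V) (b := c)
      (by simpa using hc) 0 0).norm.const_mul (exp C)
    simpa [Complex.norm_exp, ← Complex.ofReal_pow] using this
  refine hgauss.mono' (continuous_exp.comp_aestronglyMeasurable hψ.neg) (.of_forall fun x => ?_)
  rw [norm_of_nonneg (exp_pos _).le, ← exp_add, exp_le_exp]
  linarith [hle x]

theorem stmt_4_general {E T : Type*} [NormedAddCommGroup E] [NormedSpace ℝ E]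
    [FiniteDimensional ℝ E] [MeasurableSpace E] [BorelSpace E] (μ : Measure E)
    [μ.IsAddHaarMeasure] [AddCommGroup T] [Module ℝ T] {I : Set T} {φ : E × T → ℝ}
    (hφ : ConvexOn ℝ (univ ×ˢ I) φ)
    (hint : ∀ t ∈ I, Integrable (fun x => exp (-φ (x, t))) μ) :
    ConvexOn ℝ I fun t => -log (∫ x, exp (-φ (x, t)) ∂μ) := by
  have hI : Convex ℝ I := by
    simpa only [LinearMap.coe_snd, snd_image_prod univ_nonempty] using
      hφ.1.linear_image (LinearMap.snd ℝ E T)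
  have hmeas (t : T) (ht : t ∈ I) : Measurable fun x => φ (x, t) := by
    have hslice : ConvexOn ℝ univ fun x => φ (x, t) :=
      (hφ.comp_affineMap ((AffineMap.id ℝ E).prod (AffineMap.const ℝ E t))).subset
        (fun x _ => ⟨mem_univ x, ht⟩) convex_univ
    exact (continuousOn_univ.1 (hslice.continuousOn isOpen_univ)).measurable
  refine convexOn_iff_forall_pos.2 ⟨hI, fun s hs t ht a b ha hb hab => ?_⟩
  have hr : a • s + b • t ∈ I := hI hs ht ha.le hb.le hab
  exact (prekopaLeindler_of_isAddHaarMeasure μ).neg_log_integral_exp_neg_le ha hb hab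
    (hmeas s hs) (hmeas t ht) (hmeas _ hr) (hint s hs) (hint t ht) (hint _ hr)
    fun x y => hφ.2 (x := (x, s)) (y := (y, t)) ⟨mem_univ x, hs⟩ ⟨mem_univ y, ht⟩ ha.le hb.le hab

/-- Prékopa's theorem: if `φ(x,t)` is a smooth convex function on `ℝⁿ × I`
with quadratic growth in `x` locally uniformly in `t`, then
`t ↦ -log ∫ e^{-φ(x,t)} dx` is convex on `I`. -/
theorem stmt_4 {n : ℕ} (I : Set ℝ) (hIopen : IsOpen I) (hIconv : Convex ℝ I)
    (φ : EuclideanSpace ℝ (Fin n) × ℝ → ℝ)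
    (hsmooth : ContDiff ℝ (⊤ : ℕ∞) φ)
    (hconv : ConvexOn ℝ ((Set.univ : Set (EuclideanSpace ℝ (Fin n))) ×ˢ I) φ)
    (c C : ℝ) (hc : 0 < c)
    (hgrowth : ∀ x : EuclideanSpace ℝ (Fin n), ∀ t ∈ I, c * ‖x‖ ^ 2 - C ≤ φ (x, t)) :
    ConvexOn ℝ I (fun t => - Real.log (∫ x : EuclideanSpace ℝ (Fin n),
      Real.exp (-(φ (x, t))))) :=
  stmt_4_general volume hconv fun t ht => integrable_exp_neg_of_quadratic_le
    (hsmooth.continuous.comp (.prodMk_left t)).aestronglyMeasurable hc fun x => hgrowth x t ht
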